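/- arXiv:2108.07904 — 2 statements merged into one kernel-verified Lean document; each statement's English description precedes it below -/
import Mathlib

section
/- Let ρ be a log-concave probability density on ℝ such that ρ(x) ≥ ρ*/e for all x ∈ [0,b], where b > 0 and ρ* ≥ 1/(b(1 + 1/e)). Then H := ∭_{ℝ³} ρ(v)ρ(w)ρ(y) ( (|v−y| + |w−y|)/2 − |(v+w)/2 − y| ) dv dw dy satisfies H ≥ (ρ*/e)³ b⁴/24 ≥ b/(24(e+1)³). -/
/-!
Write `K v w y = (|v-y| + |w-y|)/2 - |(v+w)/2 - y|` and `c = r/e`. By the triangle inequality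
`0 ≤ K v w y ≤ |v| + |w|`. Restricting each of the three nested integrals in turn to `[0,b]` and
using `ρ ≥ c` there gives
`H ≥ c³ ∫₀ᵇ ∫₀ᵇ (v-w)²/4 dw dv = c³ b⁴/24`, because `K v w y = min (y-v) (w-y)` for `v ≤ y ≤ w`,
which integrates to `(w-v)²/4` over `[v,w]`.

A Bochner integral of a non-integrable function is `0`, so the restriction step needs the triple
integrand to be integrable, which reduces to `ρ` having a finite first moment. This is where
log-concavity enters: `ρ ≥ min (ρ x) c` between `0` and `x`, whence `|x| * min (ρ x) c ≤ 1`, and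
`ρ (2x) * c ≤ ρ x ^ 2`; together these give `|x| * ρ (2x) ≤ (ρ x + ρ (2x)) / c`
(`abs_mul_le_of_logconcave`), whose right-hand side is integrable.
-/

open MeasureTheory

/-- The defect in the midpoint triangle inequality for the distances from `y` to `v` and `w`. -/
noncomputable def midpointDefect (v w y : ℝ) : ℝ := (|v - y| + |w - y|)/2 - |(v + w)/2 - y|

lemma midpointDefect_nonneg (v w y : ℝ) : 0 ≤ midpointDefect v w y := by
  unfold midpointDefect
  have h := abs_add_le ((v - y) / 2) ((w - y) / 2)
  rw [show (v - y) / 2 + (w - y) / 2 = (v + w) / 2 - y by ring, abs_div, abs_div, abs_two] at h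
  linarith

lemma midpointDefect_le (v w y : ℝ) : midpointDefect v w y ≤ |v| + |w| := by
  unfold midpointDefect
  have h1 := abs_add_le ((v + w) / 2 - y) ((v - w) / 2)
  have h2 := abs_add_le ((v + w) / 2 - y) (-((v - w) / 2))
  rw [show (v + w) / 2 - y + (v - w) / 2 = v - y by ring] at h1
  rw [show (v + w) / 2 - y + -((v - w) / 2) = w - y by ring, abs_neg] at h2
  have h3 : |(v - w) / 2| ≤ (|v| + |w|) / 2 := by
    rw [abs_div, abs_two]
    have := abs_sub v w
    gcongr
  have := abs_nonneg v
  have := abs_nonneg w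
  linarith

lemma midpointDefect_comm (v w y : ℝ) : midpointDefect v w y = midpointDefect w v y := by
  unfold midpointDefect
  rw [add_comm |v - y|, add_comm v w]

lemma continuous_midpointDefect :
    Continuous fun p : ℝ × ℝ × ℝ => midpointDefect p.1 p.2.1 p.2.2 := by
  unfold midpointDefect
  fun_prop

lemma intervalIntegral_midpointDefect {v w : ℝ} (h : v ≤ w) :
    ∫ y in v..w, midpointDefect v w y = (v - w)^2 / 4 := by
  have hc : Continuous fun y => midpointDefect v w y := by unfold midpointDefect; fun_prop
  rw [← intervalIntegral.integral_add_adjacent_intervals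
    (hc.intervalIntegrable v ((v + w)/2)) (hc.intervalIntegrable ((v + w)/2) w)]
  have h1 : ∫ y in v..((v + w)/2), midpointDefect v w y = ∫ y in v..((v + w)/2), (y - v) := by
    refine intervalIntegral.integral_congr fun y hy => ?_
    rw [Set.uIcc_of_le (by linarith)] at hy
    have := hy.1
    have := hy.2
    simp only [midpointDefect]
    rw [abs_of_nonpos (by linarith : v - y ≤ 0), abs_of_nonneg (by linarith : 0 ≤ w - y),
      abs_of_nonneg (by linarith)]
    ring
  have h2 : ∫ y in ((v + w)/2)..w, midpointDefect v w y = ∫ y in ((v + w)/2)..w, (w - y) := by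
    refine intervalIntegral.integral_congr fun y hy => ?_
    rw [Set.uIcc_of_le (by linarith)] at hy
    have := hy.1
    have := hy.2
    simp only [midpointDefect]
    rw [abs_of_nonpos (by linarith : v - y ≤ 0), abs_of_nonneg (by linarith : 0 ≤ w - y),
      abs_of_nonpos (by linarith)]
    ring
  rw [h1, h2, intervalIntegral.integral_sub (by simp) (by simp),
    intervalIntegral.integral_sub (by simp) (by simp)]
  simp only [integral_id, intervalIntegral.integral_const, smul_eq_mul]
  ring

lemma intervalIntegral_le_integral {g h : ℝ → ℝ} {a d : ℝ} (had : a ≤ d) (hg : Integrable g)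
    (hg0 : ∀ x, 0 ≤ g x) (hh : Continuous h) (hle : ∀ x ∈ Set.Icc a d, h x ≤ g x) :
    ∫ x in a..d, h x ≤ ∫ x, g x := by
  calc ∫ x in a..d, h x ≤ ∫ x in a..d, g x :=
        intervalIntegral.integral_mono_on had (hh.intervalIntegrable _ _)
          hg.intervalIntegrable hle
    _ ≤ ∫ x, g x := by
        rw [intervalIntegral.integral_of_le had]
        exact setIntegral_le_integral hg (Filter.Eventually.of_forall hg0)

/-- A log-concave function is at least the minimum of its endpoint values on a segment,
here the one from `0` to `x`. -/
lemma le_of_logconcave {ρ : ℝ → ℝ} (hnonneg : ∀ x, 0 ≤ ρ x)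
    (hlogconc : ∀ x y lam : ℝ, 0 ≤ lam → lam ≤ 1 →
      ρ x ^ lam * ρ y ^ (1 - lam) ≤ ρ (lam * x + (1 - lam) * y))
    {m x t : ℝ} (hm : 0 ≤ m) (hx : m ≤ ρ x) (h0 : m ≤ ρ 0) (ht0 : 0 ≤ t) (ht1 : t ≤ 1) :
    m ≤ ρ (t * x) := by
  rcases hm.eq_or_lt with rfl | hm'
  · exact hnonneg _
  have h := hlogconc x 0 t ht0 ht1
  rw [mul_zero, add_zero] at h
  refine le_trans ?_ h
  calc m = m ^ t * m ^ (1 - t) := by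
        rw [← Real.rpow_add hm', add_sub_cancel, Real.rpow_one]
    _ ≤ _ := by
        have : 0 ≤ 1 - t := by linarith
        have := Real.rpow_nonneg (hnonneg x) t
        gcongr

lemma abs_mul_min_le {ρ : ℝ → ℝ} (hnonneg : ∀ x, 0 ≤ ρ x) (hint : Integrable ρ)
    (hmass : ∫ x, ρ x = 1)
    (hlogconc : ∀ x y lam : ℝ, 0 ≤ lam → lam ≤ 1 →
      ρ x ^ lam * ρ y ^ (1 - lam) ≤ ρ (lam * x + (1 - lam) * y))
    {c : ℝ} (hc : 0 < c) (h0 : c ≤ ρ 0) (x : ℝ) : |x| * min (ρ x) c ≤ 1 := by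
  have hm : 0 ≤ min (ρ x) c := le_min (hnonneg x) hc.le
  have key : ∀ t, 0 ≤ t → t ≤ 1 → min (ρ x) c ≤ ρ (t * x) := fun t =>
    le_of_logconcave hnonneg hlogconc hm (min_le_left _ _) ((min_le_right _ _).trans h0)
  rcases lt_trichotomy x 0 with hx | rfl | hx
  · have := intervalIntegral_le_integral (h := fun _ => min (ρ x) c) hx.le hint hnonneg
      continuous_const (fun s hs => by
        have := key (s / x) (div_nonneg_of_nonpos hs.2 hx.le)
          ((div_le_one_of_neg hx).2 hs.1)
        rwa [div_mul_cancel₀ _ hx.ne] at this)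
    rw [abs_of_neg hx]
    simpa [hmass] using this
  · simp
  · have := intervalIntegral_le_integral (h := fun _ => min (ρ x) c) hx.le hint hnonneg
      continuous_const (fun s hs => by
        have := key (s / x) (div_nonneg hs.1 hx.le) ((div_le_one hx).2 hs.2)
        rwa [div_mul_cancel₀ _ hx.ne'] at this)
    rw [abs_of_pos hx]
    simpa [hmass] using this

/-- The pointwise bound that yields a finite first moment. -/
lemma abs_mul_le_of_logconcave {ρ : ℝ → ℝ} (hnonneg : ∀ x, 0 ≤ ρ x) (hint : Integrable ρ)
    (hmass : ∫ x, ρ x = 1)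
    (hlogconc : ∀ x y lam : ℝ, 0 ≤ lam → lam ≤ 1 →
      ρ x ^ lam * ρ y ^ (1 - lam) ≤ ρ (lam * x + (1 - lam) * y))
    {c : ℝ} (hc : 0 < c) (h0 : c ≤ ρ 0) (x : ℝ) :
    |x| * ρ (2 * x) ≤ (ρ x + ρ (2 * x)) / c := by
  have hmin := abs_mul_min_le hnonneg hint hmass hlogconc hc h0 x
  have hsq : ρ (2 * x) * c ≤ ρ x ^ 2 := by
    have h := hlogconc (2 * x) 0 (1/2) (by norm_num) (by norm_num)
    rw [show (1/2 : ℝ) * (2 * x) + (1 - 1/2) * 0 = x by ring,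
      show (1 : ℝ) - 1/2 = 1/2 by norm_num, ← Real.sqrt_eq_rpow, ← Real.sqrt_eq_rpow,
      ← Real.sqrt_mul (hnonneg _)] at h
    have h' := (Real.sqrt_le_left (hnonneg x)).1 h
    exact (mul_le_mul_of_nonneg_left h0 (hnonneg _)).trans h'
  rw [le_div_iff₀ hc]
  have hx0 := hnonneg x
  have h2x := hnonneg (2 * x)
  rcases le_total (ρ x) c with h | h
  · rw [min_eq_left h] at hmin
    calc |x| * ρ (2 * x) * c = |x| * (ρ (2 * x) * c) := by ring
      _ ≤ |x| * ρ x ^ 2 := by gcongr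
      _ = (|x| * ρ x) * ρ x := by ring
      _ ≤ 1 * ρ x := by gcongr
      _ ≤ _ := by linarith
  · rw [min_eq_right h] at hmin
    calc |x| * ρ (2 * x) * c = (|x| * c) * ρ (2 * x) := by ring
      _ ≤ 1 * ρ (2 * x) := by gcongr
      _ ≤ _ := by linarith

lemma integrable_abs_mul {ρ : ℝ → ℝ} (hnonneg : ∀ x, 0 ≤ ρ x) (hint : Integrable ρ)
    (hmass : ∫ x, ρ x = 1)
    (hlogconc : ∀ x y lam : ℝ, 0 ≤ lam → lam ≤ 1 →
      ρ x ^ lam * ρ y ^ (1 - lam) ≤ ρ (lam * x + (1 - lam) * y))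
    {c : ℝ} (hc : 0 < c) (h0 : c ≤ ρ 0) : Integrable fun x => |x| * ρ x := by
  have h2 : Integrable fun x => ρ (2 * x) := hint.comp_mul_left' two_ne_zero
  have h : Integrable fun x => |x| * ρ (2 * x) := by
    refine ((hint.add h2).div_const c).mono'
      (continuous_abs.aestronglyMeasurable.mul h2.aestronglyMeasurable)
      (Filter.Eventually.of_forall fun x => ?_)
    rw [Real.norm_of_nonneg (mul_nonneg (abs_nonneg x) (hnonneg _))]
    exact abs_mul_le_of_logconcave hnonneg hint hmass hlogconc hc h0 x
  have h' := (h.comp_mul_left' (R := 1/2) (by norm_num)).const_mul 2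
  refine h'.congr (Filter.Eventually.of_forall fun x => ?_)
  simp only [abs_mul]
  rw [show (2 : ℝ) * (1 / 2 * x) = x by ring, abs_of_pos (by norm_num : (0 : ℝ) < 1/2)]
  ring

lemma integrable_slice {ρ : ℝ → ℝ} (hnonneg : ∀ x, 0 ≤ ρ x) (hint : Integrable ρ)
    (hmom : Integrable fun x => |x| * ρ x) (v : ℝ) :
    Integrable (fun p : ℝ × ℝ => ρ v * ρ p.1 * ρ p.2 * midpointDefect v p.1 p.2)
      (volume.prod volume) := by
  have hK : Continuous fun p : ℝ × ℝ => midpointDefect v p.1 p.2 := by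
    unfold midpointDefect; fun_prop
  have hd := ((hint.mul_prod hint).const_mul (ρ v * |v|)).add
    ((hmom.mul_prod hint).const_mul (ρ v))
  refine hd.mono' ?_ (Filter.Eventually.of_forall fun p => ?_)
  · refine AEStronglyMeasurable.mul ?_ hK.aestronglyMeasurable
    simp only [mul_assoc]
    exact ((hint.mul_prod hint).const_mul (ρ v)).aestronglyMeasurable
  · have h3 : 0 ≤ ρ v * ρ p.1 * ρ p.2 :=
      mul_nonneg (mul_nonneg (hnonneg _) (hnonneg _)) (hnonneg _)
    rw [Real.norm_of_nonneg (mul_nonneg h3 (midpointDefect_nonneg _ _ _))]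
    refine (mul_le_mul_of_nonneg_left (midpointDefect_le _ _ _) h3).trans (le_of_eq ?_)
    simp only [Pi.add_apply]
    ring

lemma integrable_triple {ρ : ℝ → ℝ} (hnonneg : ∀ x, 0 ≤ ρ x) (hint : Integrable ρ)
    (hmom : Integrable fun x => |x| * ρ x) :
    Integrable (fun p : ℝ × ℝ × ℝ =>
      ρ p.1 * ρ p.2.1 * ρ p.2.2 * midpointDefect p.1 p.2.1 p.2.2)
      (volume.prod (volume.prod volume)) := by
  have hd := (hmom.mul_prod (hint.mul_prod hint)).add (hint.mul_prod (hmom.mul_prod hint))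
  refine hd.mono' ?_ (Filter.Eventually.of_forall fun p => ?_)
  · refine AEStronglyMeasurable.mul ?_ continuous_midpointDefect.aestronglyMeasurable
    simp only [mul_assoc]
    exact (hint.mul_prod (hint.mul_prod hint)).aestronglyMeasurable
  · have h3 : 0 ≤ ρ p.1 * ρ p.2.1 * ρ p.2.2 :=
      mul_nonneg (mul_nonneg (hnonneg _) (hnonneg _)) (hnonneg _)
    rw [Real.norm_of_nonneg (mul_nonneg h3 (midpointDefect_nonneg _ _ _))]
    refine (mul_le_mul_of_nonneg_left (midpointDefect_le _ _ _) h3).trans (le_of_eq ?_)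
    simp only [Pi.add_apply]
    ring

/-- If `ρ` is a log-concave probability density with `ρ ≥ ρ*/e` on `[0,b]`,
`b > 0` and `ρ* ≥ 1/(b(1+1/e))`, then
`H = ∭ ρ(v)ρ(w)ρ(y)((|v-y|+|w-y|)/2 - |(v+w)/2-y|) dv dw dy` satisfies
`H ≥ (ρ*/e)³ b⁴/24 ≥ b/(24(e+1)³)`. -/
theorem dissipation_lower_bound (ρ : ℝ → ℝ) (b r : ℝ) (hb : 0 < b) (hr : 0 < r)
    (hnonneg : ∀ x, 0 ≤ ρ x) (hmass : ∫ x, ρ x = 1)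
    (hlogconc : ∀ x y lam : ℝ, 0 ≤ lam → lam ≤ 1 →
      ρ x ^ lam * ρ y ^ (1 - lam) ≤ ρ (lam * x + (1 - lam) * y))
    (hlower : ∀ x ∈ Set.Icc (0:ℝ) b, r / Real.exp 1 ≤ ρ x)
    (hrlow : 1 / (b * (1 + 1 / Real.exp 1)) ≤ r) :
    (r / Real.exp 1)^3 * b^4 / 24 ≤
      (∫ v, ∫ w, ∫ y, ρ v * ρ w * ρ y * ((|v - y| + |w - y|)/2 - |(v + w)/2 - y|)) ∧
    b / (24 * (Real.exp 1 + 1)^3) ≤ (r / Real.exp 1)^3 * b^4 / 24 := by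
  have he : 0 < Real.exp 1 := Real.exp_pos 1
  constructor
  · change _ ≤ ∫ v, ∫ w, ∫ y, ρ v * ρ w * ρ y * midpointDefect v w y
    obtain ⟨c, hcdef⟩ : ∃ c, c = r / Real.exp 1 := ⟨_, rfl⟩
    rw [← hcdef] at hlower ⊢
    have hc : 0 < c := hcdef ▸ div_pos hr he
    -- The integral of a non-integrable function would be `0`, not `1`.
    have hint : Integrable ρ := by
      by_contra h
      rw [integral_undef h] at hmass
      exact zero_ne_one hmass
    have hmom := integrable_abs_mul hnonneg hint hmass hlogconc hc
      (hlower 0 ⟨le_rfl, hb.le⟩)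
    have hpos : ∀ v w y, 0 ≤ ρ v * ρ w * ρ y * midpointDefect v w y := fun v w y =>
      mul_nonneg (mul_nonneg (mul_nonneg (hnonneg _) (hnonneg _)) (hnonneg _))
        (midpointDefect_nonneg _ _ _)
    have hi2 : ∀ v, Integrable fun w => ∫ y, ρ v * ρ w * ρ y * midpointDefect v w y :=
      fun v => (integrable_slice hnonneg hint hmom v).integral_prod_left
    have hi1 : Integrable fun v => ∫ w, ∫ y, ρ v * ρ w * ρ y * midpointDefect v w y := by
      refine (integrable_triple hnonneg hint hmom).integral_prod_left.congr
        (Filter.Eventually.of_forall fun v => ?_)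
      exact integral_prod _ (integrable_slice hnonneg hint hmom v)
    have hi3 : ∀ v w, Integrable fun y => ρ v * ρ w * ρ y * midpointDefect v w y := by
      intro v w
      refine (hint.const_mul (ρ v * ρ w * (|v| + |w|))).mono' ?_
        (Filter.Eventually.of_forall fun y => ?_)
      · have : Continuous fun y => midpointDefect v w y := by unfold midpointDefect; fun_prop
        exact (hint.const_mul (ρ v * ρ w)).aestronglyMeasurable.mul this.aestronglyMeasurable
      · rw [Real.norm_of_nonneg (hpos v w y)]
        refine (mul_le_mul_of_nonneg_left (midpointDefect_le _ _ _)
          (mul_nonneg (mul_nonneg (hnonneg v) (hnonneg w)) (hnonneg y))).trans (le_of_eq ?_)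
        ring
    have hle : ∀ v ∈ Set.Icc 0 b, ∀ w ∈ Set.Icc 0 b, v ≤ w →
        c^3 * ((v - w)^2 / 4) ≤ ∫ y, ρ v * ρ w * ρ y * midpointDefect v w y := by
      intro v hv w hw hvw
      rw [← intervalIntegral_midpointDefect hvw, ← intervalIntegral.integral_const_mul]
      refine intervalIntegral_le_integral hvw (hi3 v w) (hpos v w)
        (by unfold midpointDefect; fun_prop) fun y hy => ?_
      refine mul_le_mul_of_nonneg_right ?_ (midpointDefect_nonneg _ _ _)
      have h1 := hlower v hv
      have h2 := hlower w hw
      have h3 := hlower y ⟨hv.1.trans hy.1, hy.2.trans hw.2⟩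
      have := hnonneg v
      have := hnonneg w
      calc c^3 = c * c * c := by ring
        _ ≤ _ := by gcongr
    have hle' : ∀ v ∈ Set.Icc 0 b, ∀ w ∈ Set.Icc 0 b,
        c^3 * ((v - w)^2 / 4) ≤ ∫ y, ρ v * ρ w * ρ y * midpointDefect v w y := by
      intro v hv w hw
      rcases le_total v w with h | h
      · exact hle v hv w hw h
      · have := hle w hw v hv h
        simp only [midpointDefect_comm w v, mul_comm (ρ w) (ρ v)] at this
        rwa [← neg_sub w v, neg_sq]
    have hw : ∀ v ∈ Set.Icc 0 b, c^3 / 12 * (b^3 - 3 * v * b^2 + 3 * v^2 * b) ≤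
        ∫ w, ∫ y, ρ v * ρ w * ρ y * midpointDefect v w y := by
      intro v hv
      have := intervalIntegral_le_integral hb.le (hi2 v)
        (fun w => integral_nonneg (hpos v w)) (by fun_prop) (hle' v hv)
      refine le_trans (le_of_eq ?_) this
      rw [intervalIntegral.integral_const_mul, intervalIntegral.integral_div,
        intervalIntegral.integral_comp_sub_left (fun x => x^2) v, integral_pow]
      norm_num
      ring
    have := intervalIntegral_le_integral hb.le hi1
      (fun v => integral_nonneg fun w => integral_nonneg (hpos v w)) (by fun_prop) hw
    refine le_trans (le_of_eq ?_) this
    have e : ∀ v : ℝ, b^3 - 3 * v * b^2 + 3 * v^2 * b = (b^3 - v * (3 * b^2)) + v^2 * (3 * b) :=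
      fun v => by ring
    simp only [e]
    rw [intervalIntegral.integral_const_mul,
      intervalIntegral.integral_add (Continuous.intervalIntegrable (by fun_prop) _ _)
        (Continuous.intervalIntegrable (by fun_prop) _ _),
      intervalIntegral.integral_sub (Continuous.intervalIntegrable (by fun_prop) _ _)
        (Continuous.intervalIntegrable (by fun_prop) _ _),
      intervalIntegral.integral_mul_const, intervalIntegral.integral_mul_const, integral_pow,
      integral_id, intervalIntegral.integral_const, smul_eq_mul]
    norm_num
    ring
  · have h : 1 / (b * (Real.exp 1 + 1)) ≤ r / Real.exp 1 := by
      rw [le_div_iff₀ he]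
      refine le_trans (le_of_eq ?_) hrlow
      field_simp
    calc b / (24 * (Real.exp 1 + 1)^3)
        = (1 / (b * (Real.exp 1 + 1)))^3 * b^4 / 24 := by field_simp
      _ ≤ _ := by gcongr
end

section
/- Let μ > 0 and let ρ(x) = x^{μ−1} e^{−x} / Γ(μ) for x > 0 (the gamma probability density with shape parameter μ and rate parameter 1), which has mean μ. Then its Gini index equals G[ρ] = (1/(2μ)) ∬_{(0,∞)²} ρ(x)ρ(y)|x−y| dx dy = 2^{1−2μ} Γ(2μ) / (μ Γ(μ)²). -/
open MeasureTheory

/-!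
The constant `1 / Γ(μ)²` factors out, so the claim concerns
`I = ∬ x^{μ-1} y^{μ-1} e^{-x-y} |x - y| dy dx`. For fixed `x > 0` the substitution `y = x t` in the
inner integral gives the integrand `x^{2μ} e^{-(1+t)x} · t^{μ-1} |1 - t|`. It is nonnegative, and
after exchanging the integrals the `x`-integral is `Γ(2μ+1) (1+t)^{-2μ-1}`, a Gamma integral. There
remains `∫₀^∞ t^{μ-1} |1 - t| (1+t)^{-2μ-1} dt`, which is elementary: the function
`F(t) = t^μ (1+t)^{-2μ}` satisfies `F'(t) = μ t^{μ-1} (1 - t) (1+t)^{-2μ-1}`, it vanishes at `0` and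
at `∞`, and it increases up to `t = 1` and decreases afterwards, so the integral is
`2 F(1) / μ = 2 · 4^{-μ} / μ`. Hence `I = Γ(2μ+1) · 2 · 4^{-μ} / μ = 2^{2-2μ} Γ(2μ)`.
-/

open Set Filter Topology

/-- The function `F(t) = t^μ (1+t)^{-2μ}`, a primitive (up to the factor `μ`) of
`t^{μ-1} (1 - t) (1+t)^{-2μ-1}`. -/
noncomputable def giniPrimitive (μ t : ℝ) : ℝ := t ^ μ * (1 + t) ^ (-(2 * μ))

lemma hasDerivAt_giniPrimitive (μ : ℝ) {t : ℝ} (ht : 0 < t) :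
    HasDerivAt (giniPrimitive μ) (μ * (t ^ (μ - 1) * (1 - t) * (1 + t) ^ (-(2 * μ + 1)))) t := by
  have h1 : HasDerivAt (fun t : ℝ => t ^ μ) (μ * t ^ (μ - 1)) t :=
    Real.hasDerivAt_rpow_const (Or.inl ht.ne')
  have h2 : HasDerivAt (fun t : ℝ => (1 + t) ^ (-(2 * μ)))
      (1 * (-(2 * μ)) * (1 + t) ^ (-(2 * μ) - 1)) t :=
    ((hasDerivAt_id t).const_add 1).rpow_const (Or.inl (by simp only [id]; positivity))
  refine (h1.mul h2).congr_deriv ?_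
  have e1 : t ^ μ = t ^ (μ - 1) * t := by
    rw [← Real.rpow_add_one ht.ne']; ring_nf
  have e2 : (1 + t) ^ (-(2 * μ)) = (1 + t) ^ (-(2 * μ + 1)) * (1 + t) := by
    rw [← Real.rpow_add_one (by positivity)]; ring_nf
  have e3 : (1 + t) ^ (-(2 * μ) - 1) = (1 + t) ^ (-(2 * μ + 1)) := by ring_nf
  rw [e1, e2, e3]
  ring

lemma giniPrimitive_zero {μ : ℝ} (hμ : 0 < μ) : giniPrimitive μ 0 = 0 := by
  simp [giniPrimitive, Real.zero_rpow hμ.ne']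

lemma giniPrimitive_one (μ : ℝ) : giniPrimitive μ 1 = 2 ^ (-(2 * μ)) := by
  norm_num [giniPrimitive]

lemma continuousOn_giniPrimitive {μ : ℝ} (hμ : 0 < μ) :
    ContinuousOn (giniPrimitive μ) (Ici 0) := by
  unfold giniPrimitive
  refine ContinuousOn.mul ?_ ?_
  · exact (Real.continuous_rpow_const hμ.le).continuousOn
  · refine ContinuousOn.rpow_const (by fun_prop) fun t ht => Or.inl ?_
    have : (0 : ℝ) ≤ t := ht
    positivity

lemma tendsto_giniPrimitive_atTop {μ : ℝ} (hμ : 0 < μ) :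
    Tendsto (giniPrimitive μ) atTop (𝓝 0) := by
  refine squeeze_zero' ?_ ?_ (tendsto_rpow_neg_atTop hμ)
  · filter_upwards [eventually_gt_atTop 0] with t ht
    unfold giniPrimitive; positivity
  · filter_upwards [eventually_gt_atTop 0] with t ht
    have : (1 + t) ^ (-(2 * μ)) ≤ t ^ (-(2 * μ)) :=
      Real.rpow_le_rpow_of_nonpos ht (by linarith) (by linarith)
    calc giniPrimitive μ t ≤ t ^ μ * t ^ (-(2 * μ)) := by
          unfold giniPrimitive; gcongr
      _ = t ^ (-μ) := by rw [← Real.rpow_add ht]; ring_nf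

/-- The kernel left after the `x`-integration is integrable, with integral `2 F(1) / μ`. -/
lemma gini_kernel {μ : ℝ} (hμ : 0 < μ) :
    IntegrableOn (fun t : ℝ => t ^ (μ - 1) * |1 - t| * (1 + t) ^ (-(2 * μ + 1))) (Ioi 0) ∧
    ∫ t in Ioi (0 : ℝ), t ^ (μ - 1) * |1 - t| * (1 + t) ^ (-(2 * μ + 1)) =
      2 * 2 ^ (-(2 * μ)) / μ := by
  set k : ℝ → ℝ := fun t => t ^ (μ - 1) * |1 - t| * (1 + t) ^ (-(2 * μ + 1)) with hk
  set d : ℝ → ℝ := fun t => μ * (t ^ (μ - 1) * (1 - t) * (1 + t) ^ (-(2 * μ + 1))) with hd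
  have hkd1 : EqOn (fun t => μ⁻¹ * d t) k (Ioc 0 1) := by
    intro t ht
    simp only [hk, hd]
    rw [abs_of_nonneg (by linarith [ht.2])]
    field_simp
  have hkd2 : EqOn (fun t => -μ⁻¹ * d t) k (Ioi 1) := by
    intro t ht
    simp only [hk, hd]
    rw [abs_of_nonpos (by linarith [mem_Ioi.1 ht])]
    field_simp
  have hc := continuousOn_giniPrimitive hμ
  have hd1 : IntegrableOn d (Ioc 0 1) := by
    refine intervalIntegral.integrableOn_deriv_of_nonneg (hc.mono Icc_subset_Ici_self)
      (fun t ht => hasDerivAt_giniPrimitive μ ht.1) fun t ht => ?_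
    have h0 := ht.1
    have h1 : 0 ≤ 1 - t := by linarith [ht.2]
    positivity
  have hv1 : ∫ t in Ioc (0 : ℝ) 1, d t = 2 ^ (-(2 * μ)) := by
    rw [← intervalIntegral.integral_of_le zero_le_one,
      intervalIntegral.integral_eq_sub_of_hasDerivAt_of_le zero_le_one
        (hc.mono Icc_subset_Ici_self) (fun t ht => hasDerivAt_giniPrimitive μ ht.1)
        ((intervalIntegrable_iff_integrableOn_Ioc_of_le zero_le_one).2 hd1),
      giniPrimitive_one, giniPrimitive_zero hμ, sub_zero]
  have hder2 : ∀ t ∈ Ici (1 : ℝ), HasDerivAt (giniPrimitive μ) (d t) t := fun t ht =>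
    hasDerivAt_giniPrimitive μ (lt_of_lt_of_le one_pos ht)
  have hneg2 : ∀ t ∈ Ioi (1 : ℝ), d t ≤ 0 := by
    intro t ht
    have h0 : 0 < t := lt_trans one_pos ht
    have h1 : 1 - t ≤ 0 := by linarith [mem_Ioi.1 ht]
    exact mul_nonpos_of_nonneg_of_nonpos hμ.le
      (mul_nonpos_of_nonpos_of_nonneg (mul_nonpos_of_nonneg_of_nonpos (by positivity) h1)
        (by positivity))
  have hlim := tendsto_giniPrimitive_atTop hμ
  have hd2 : IntegrableOn d (Ioi 1) := integrableOn_Ioi_deriv_of_nonpos' hder2 hneg2 hlim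
  have hv2 : ∫ t in Ioi (1 : ℝ), d t = -2 ^ (-(2 * μ)) := by
    rw [integral_Ioi_of_hasDerivAt_of_nonpos' hder2 hneg2 hlim, giniPrimitive_one, zero_sub]
  have hk1 : IntegrableOn k (Ioc 0 1) :=
    IntegrableOn.congr_fun (hd1.const_mul μ⁻¹) hkd1 measurableSet_Ioc
  have hk2 : IntegrableOn k (Ioi 1) :=
    IntegrableOn.congr_fun (hd2.const_mul (-μ⁻¹)) hkd2 measurableSet_Ioi
  rw [← Ioc_union_Ioi_eq_Ioi (zero_le_one' ℝ)]
  refine ⟨hk1.union hk2, ?_⟩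
  rw [setIntegral_union (Ioc_disjoint_Ioi le_rfl) measurableSet_Ioi hk1 hk2,
    ← setIntegral_congr_fun measurableSet_Ioc hkd1, ← setIntegral_congr_fun measurableSet_Ioi hkd2,
    integral_const_mul μ⁻¹ d, integral_const_mul (-μ⁻¹) d, hv1, hv2]
  field_simp
  ring

/-- The Gamma integral in `x`, for fixed `t`. -/
lemma gini_gamma_integral {μ t : ℝ} (hμ : 0 < μ) (ht : 0 < t) :
    ∫ x in Ioi (0 : ℝ), x ^ (2 * μ) * Real.exp (-((1 + t) * x)) * (t ^ (μ - 1) * |1 - t|) =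
      Real.Gamma (2 * μ + 1) * (t ^ (μ - 1) * |1 - t| * (1 + t) ^ (-(2 * μ + 1))) := by
  have h := Real.integral_rpow_mul_exp_neg_mul_Ioi (a := 2 * μ + 1) (r := 1 + t)
    (by positivity) (by positivity)
  rw [add_sub_cancel_right] at h
  rw [integral_mul_const, h, one_div, Real.inv_rpow (by positivity), ← Real.rpow_neg (by positivity)]
  ring

lemma gini_gamma_integrable {μ t : ℝ} (hμ : 0 < μ) (ht : 0 < t) :
    IntegrableOn (fun x : ℝ => x ^ (2 * μ) * Real.exp (-((1 + t) * x)) * (t ^ (μ - 1) * |1 - t|))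
      (Ioi 0) := by
  have h := Real.integral_rpow_mul_exp_neg_mul_Ioi (a := 2 * μ + 1) (r := 1 + t)
    (by positivity) (by positivity)
  rw [add_sub_cancel_right] at h
  have hG := Real.Gamma_pos_of_pos (s := 2 * μ + 1) (by positivity)
  -- A function whose Bochner integral is nonzero is integrable.
  have hi : IntegrableOn (fun x : ℝ => x ^ (2 * μ) * Real.exp (-((1 + t) * x))) (Ioi 0) := by
    refine Integrable.of_integral_ne_zero ?_
    rw [h]; positivity
  exact hi.mul_const _

/-- The integrand after the substitution `y = x t` is integrable on the quadrant. -/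
lemma gini_integrable_prod {μ : ℝ} (hμ : 0 < μ) :
    Integrable (Function.uncurry fun x t : ℝ =>
      x ^ (2 * μ) * Real.exp (-((1 + t) * x)) * (t ^ (μ - 1) * |1 - t|))
      ((volume.restrict (Ioi 0)).prod (volume.restrict (Ioi 0))) := by
  rw [integrable_prod_iff']
  · constructor
    · filter_upwards [ae_restrict_mem measurableSet_Ioi] with t ht
      exact gini_gamma_integrable hμ ht
    · refine IntegrableOn.congr_fun ((gini_kernel hμ).1.const_mul (Real.Gamma (2 * μ + 1)))
        (fun t ht => ?_) measurableSet_Ioi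
      simp only [Function.uncurry]
      rw [← gini_gamma_integral hμ ht]
      refine setIntegral_congr_fun measurableSet_Ioi fun x hx => ?_
      have hx' : 0 < x := hx
      have ht' : 0 < t := ht
      exact (Real.norm_of_nonneg (by positivity)).symm
  · unfold Function.uncurry
    exact Measurable.aestronglyMeasurable (by fun_prop)

/-- The substitution `y = x t` in the inner integral. -/
lemma gini_substitution (μ : ℝ) {x : ℝ} (hx : 0 < x) :
    ∫ y in Ioi (0 : ℝ), (x ^ (μ - 1) * Real.exp (-x)) * (y ^ (μ - 1) * Real.exp (-y)) * |x - y| =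
      ∫ t in Ioi (0 : ℝ), x ^ (2 * μ) * Real.exp (-((1 + t) * x)) * (t ^ (μ - 1) * |1 - t|) := by
  have h := integral_comp_mul_left_Ioi (fun y : ℝ =>
    (x ^ (μ - 1) * Real.exp (-x)) * (y ^ (μ - 1) * Real.exp (-y)) * |x - y|) 0 hx
  rw [mul_zero, smul_eq_mul, eq_inv_mul_iff_mul_eq₀ hx.ne', ← integral_const_mul] at h
  rw [← h]
  refine setIntegral_congr_fun measurableSet_Ioi fun t ht => ?_
  have ht' : 0 < t := ht
  have e1 : |x - x * t| = x * |1 - t| := by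
    rw [show x - x * t = x * (1 - t) by ring, abs_mul, abs_of_pos hx]
  have e2 : Real.exp (-((1 + t) * x)) = Real.exp (-x) * Real.exp (-(x * t)) := by
    rw [← Real.exp_add]; ring_nf
  have e3 : x ^ (2 * μ) = x ^ (μ - 1) * x ^ (μ - 1) * x * x := by
    rw [← Real.rpow_add hx, ← Real.rpow_add_one hx.ne', ← Real.rpow_add_one hx.ne']; ring_nf
  rw [e1, e2, e3, Real.mul_rpow hx.le ht'.le]
  ring

lemma gini_double_integral {μ : ℝ} (hμ : 0 < μ) :
    ∫ x in Ioi (0 : ℝ), ∫ y in Ioi (0 : ℝ),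
      (x ^ (μ - 1) * Real.exp (-x)) * (y ^ (μ - 1) * Real.exp (-y)) * |x - y| =
      4 * 2 ^ (-(2 * μ)) * Real.Gamma (2 * μ) := by
  rw [setIntegral_congr_fun measurableSet_Ioi fun x hx => gini_substitution μ hx,
    integral_integral_swap (gini_integrable_prod hμ),
    setIntegral_congr_fun measurableSet_Ioi fun t ht => gini_gamma_integral hμ ht,
    integral_const_mul, (gini_kernel hμ).2, Real.Gamma_add_one (by positivity)]
  field_simp
  ring

/-- The gamma density `ρ(x) = x^{μ-1} e^{-x}/Γ(μ)` on `(0,∞)` (shape `μ > 0`,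
rate 1) has mean `μ`, and its Gini index equals
`(1/(2μ)) ∬ ρ(x)ρ(y)|x-y| dx dy = 2^{1-2μ} Γ(2μ)/(μ Γ(μ)²)`. -/
theorem gamma_gini_index (μ : ℝ) (hμ : 0 < μ) (ρ : ℝ → ℝ)
    (hρ : ∀ x > (0:ℝ), ρ x = x ^ (μ - 1) * Real.exp (-x) / Real.Gamma μ) :
    (∫ x in Set.Ioi (0:ℝ), x * ρ x) = μ ∧
    (1/(2*μ)) * (∫ x in Set.Ioi (0:ℝ), ∫ y in Set.Ioi (0:ℝ), ρ x * ρ y * |x - y|) =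
      2 ^ (1 - 2*μ) * Real.Gamma (2*μ) / (μ * Real.Gamma μ ^ 2) := by
  have hG := Real.Gamma_pos_of_pos hμ
  constructor
  · have h : ∀ x ∈ Ioi (0 : ℝ),
        x * ρ x = Real.exp (-x) * x ^ (μ + 1 - 1) * (Real.Gamma μ)⁻¹ := by
      intro x hx
      have hx' : 0 < x := hx
      have e : x ^ (μ + 1 - 1) = x ^ (μ - 1) * x := by
        rw [← Real.rpow_add_one hx'.ne']; ring_nf
      rw [hρ x hx, e]
      ring
    rw [setIntegral_congr_fun measurableSet_Ioi h, integral_mul_const,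
      ← Real.Gamma_eq_integral (by positivity), Real.Gamma_add_one hμ.ne']
    field_simp
  · have h : ∫ x in Ioi (0 : ℝ), ∫ y in Ioi (0 : ℝ), ρ x * ρ y * |x - y| =
        (Real.Gamma μ ^ 2)⁻¹ * (4 * 2 ^ (-(2 * μ)) * Real.Gamma (2 * μ)) := by
      rw [← gini_double_integral hμ, ← integral_const_mul]
      refine setIntegral_congr_fun measurableSet_Ioi fun x hx => ?_
      rw [← integral_const_mul]
      refine setIntegral_congr_fun measurableSet_Ioi fun y hy => ?_
      rw [hρ x hx, hρ y hy]
      field_simp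
    have e : (2 : ℝ) ^ (1 - 2 * μ) = 2 * 2 ^ (-(2 * μ)) := by
      rw [sub_eq_add_neg, Real.rpow_add two_pos, Real.rpow_one]
    rw [h, e]
    field_simp
    ring
end
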